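/- arXiv:2206.15205 — 5 statements merged into one kernel-verified Lean document; each statement's English description precedes it below -/
import Mathlib

section
/- Let φ : ℝ → ℝ be convex and non-increasing (antitone), let S be a finite nonempty set of functions from a set X to ℝ, and fix x ∈ X. Then the supremum over pairs h, h' in the convex hull of S and over y ∈ {−1, +1} of |φ(y·h(x)) − φ(y·h'(x))| equals the maximum over pairs h, h' ∈ S and y ∈ {−1, +1} of |φ(y·h(x)) − φ(y·h'(x))|. In particular, every pair in the convex hull achieves disagreement at most this finite maximum, and the maximum is attained by a pair in S. -/
/-!
If a linear functional has its minimum over `S` at `f` and its maximum at `g`, the same holds over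
the convex hull of `S`, because intervals are convex. Multiplying by a label `y` maps the interval
spanned by the two extreme values onto the one spanned by their margins, and a monotone function
separates no two points of an interval further than its endpoints. So `f` and `g` disagree most for
every label at once, and only the label is left to maximize over.
-/

theorem abs_sub_le_of_antitone_of_mem_uIcc {α R : Type*} [LinearOrder α]
    [AddCommGroup R] [LinearOrder R] [IsOrderedAddMonoid R] {φ : α → R} (hφ : Antitone φ)
    {a b s t : α} (hs : s ∈ Set.uIcc a b) (ht : t ∈ Set.uIcc a b) :
    |φ s - φ t| ≤ |φ a - φ b| := by
  rw [abs_sub_comm (φ s), abs_sub_comm (φ a)]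
  exact Set.abs_sub_le_of_uIcc_subset_uIcc
    (Set.uIcc_subset_uIcc (hφ.mapsTo_uIcc hs) (hφ.mapsTo_uIcc ht))

section LinearOrderedField

variable {𝕜 E R : Type*} [Field 𝕜] [LinearOrder 𝕜] [IsStrictOrderedRing 𝕜]
  [AddCommGroup E] [Module 𝕜 E] [AddCommGroup R] [LinearOrder R] [IsOrderedAddMonoid R]
  {S : Set E} {ℓ : E →ₗ[𝕜] 𝕜} {f g h h' : E}

theorem mul_mem_uIcc_mul_left {a b s : 𝕜} (y : 𝕜) (hs : s ∈ Set.uIcc a b) :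
    y * s ∈ Set.uIcc (y * a) (y * b) :=
  Set.image_const_mul_uIcc y a b ▸ Set.mem_image_of_mem (y * ·) hs

theorem map_mem_uIcc_of_mem_convexHull (hf : ∀ k ∈ S, ℓ f ≤ ℓ k) (hg : ∀ k ∈ S, ℓ k ≤ ℓ g)
    (hh : h ∈ convexHull 𝕜 S) : ℓ h ∈ Set.uIcc (ℓ f) (ℓ g) := by
  have hS : Set.MapsTo ℓ S (Set.uIcc (ℓ f) (ℓ g)) := fun k hk =>
    Set.mem_uIcc_of_le (hf k hk) (hg k hk)
  exact convexHull_min hS ((convex_uIcc (ℓ f) (ℓ g)).linear_preimage ℓ) hh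

theorem margin_disagreement_le_of_mem_convexHull {φ : 𝕜 → R} (hφ : Antitone φ)
    (hf : ∀ k ∈ S, ℓ f ≤ ℓ k) (hg : ∀ k ∈ S, ℓ k ≤ ℓ g)
    (hh : h ∈ convexHull 𝕜 S) (hh' : h' ∈ convexHull 𝕜 S) (y : 𝕜) :
    |φ (y * ℓ h) - φ (y * ℓ h')| ≤ |φ (y * ℓ f) - φ (y * ℓ g)| :=
  abs_sub_le_of_antitone_of_mem_uIcc hφ
    (mul_mem_uIcc_mul_left y (map_mem_uIcc_of_mem_convexHull hf hg hh))
    (mul_mem_uIcc_mul_left y (map_mem_uIcc_of_mem_convexHull hf hg hh'))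

theorem convexHull_max_error_disagreement_general {φ : 𝕜 → R} (hφ : Antitone φ)
    (ℓ : E →ₗ[𝕜] 𝕜) (hmin : ∃ f ∈ S, ∀ k ∈ S, ℓ f ≤ ℓ k) (hmax : ∃ g ∈ S, ∀ k ∈ S, ℓ k ≤ ℓ g)
    {Y : Set 𝕜} (hYfin : Y.Finite) (hYne : Y.Nonempty) :
    ∃ h₁ ∈ S, ∃ h₂ ∈ S, ∃ y ∈ Y,
      IsGreatest
        {d : R | ∃ h ∈ convexHull 𝕜 S, ∃ h' ∈ convexHull 𝕜 S, ∃ y' ∈ Y,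
          d = |φ (y' * ℓ h) - φ (y' * ℓ h')|}
        |φ (y * ℓ h₁) - φ (y * ℓ h₂)| := by
  obtain ⟨f, hfS, hf⟩ := hmin
  obtain ⟨g, hgS, hg⟩ := hmax
  obtain ⟨y, hyY, hy⟩ :=
    Set.exists_max_image Y (fun y => |φ (y * ℓ f) - φ (y * ℓ g)|) hYfin hYne
  refine ⟨f, hfS, g, hgS, y, hyY,
    ⟨f, subset_convexHull 𝕜 S hfS, g, subset_convexHull 𝕜 S hgS, y, hyY, rfl⟩, ?_⟩
  rintro _ ⟨h, hh, h', hh', y', hy'Y, rfl⟩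
  exact (margin_disagreement_le_of_mem_convexHull hφ hf hg hh hh' y').trans (hy y' hy'Y)

end LinearOrderedField

/-- Lemma 5.1: For a convex, non-increasing `φ : ℝ → ℝ`, a finite nonempty set `S`
of hypotheses `X → ℝ`, and a fixed `x : X`, the supremum over pairs in the convex hull of `S`
and labels `y ∈ {-1, 1}` of the pointwise loss disagreement `|φ (y * h x) - φ (y * h' x)|`
equals the maximum over pairs in `S` and `y ∈ {-1, 1}`; i.e. this maximum is a greatest element
of the set of all disagreement values over the convex hull, and it is attained on `S`. -/
theorem convexHull_max_error_disagreement
    {X : Type*} (φ : ℝ → ℝ) (hconv : ConvexOn ℝ Set.univ φ) (hanti : Antitone φ)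
    (S : Set (X → ℝ)) (hSfin : S.Finite) (hSne : S.Nonempty) (x : X) :
    ∃ h₁ ∈ S, ∃ h₂ ∈ S, ∃ y ∈ ({-1, 1} : Set ℝ),
      IsGreatest
        {d : ℝ | ∃ h ∈ convexHull ℝ S, ∃ h' ∈ convexHull ℝ S, ∃ y' ∈ ({-1, 1} : Set ℝ),
          d = |φ (y' * h x) - φ (y' * h' x)|}
        |φ (y * h₁ x) - φ (y * h₂ x)| :=
  convexHull_max_error_disagreement_general hanti (LinearMap.proj (φ := fun _ => ℝ) x)
    (Set.exists_min_image S _ hSfin hSne) (Set.exists_max_image S _ hSfin hSne)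
    (Set.toFinite _) (Set.insert_nonempty _ _)
end

section
/- Let (Ω, ℱ, P) be a probability space and let 𝔪₁ ⊆ 𝔪₂ ⊆ ℱ be sub-σ-algebras. Let Z : Ω → ℝ be bounded and 𝔪₂-measurable such that the σ-algebra generated by Z is independent of 𝔪₁. Let p : Ω → ℝ be 𝔪₂-measurable with 0 < p ≤ 1 almost everywhere, and let Q : Ω → ℝ be integrable, take values in {0, 1}, and satisfy E[Q ∣ 𝔪₂] = p almost everywhere. Then E[(Q/p)·Z ∣ 𝔪₁] = E[Z] almost everywhere (a constant). -/
open MeasureTheory ProbabilityTheory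

/-!
Conditioning on `m₂` first cancels the weight: `p` and `Z` are pulled out of `E[(Q / p) Z ∣ m₂]`,
leaving `E[Q ∣ m₂] / p * Z = Z`, and the tower property together with independence reduces
`E[Z ∣ m₁]` to `E[Z]`. Pulling out requires `(Q / p) Z` to be integrable although `1 / p` may be
unbounded. This holds because `Q ≥ 0`: for nonnegative functions the pull-out formula holds for
Lebesgue integrals without any integrability, so `E|(Q / p) Z| = E[(E[Q ∣ m₂] / p) |Z|] = E|Z|`.
-/

section

open scoped ENNReal

variable {Ω E : Type*} {m m0 : MeasurableSpace Ω} {μ : Measure Ω}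

theorem trim_withDensity_condLExp (hm : m ≤ m0) [SigmaFinite (μ.trim hm)] (f : Ω → ℝ≥0∞) :
    (μ.withDensity μ⁻[f | m]).trim hm = (μ.withDensity f).trim hm := by
  refine @Measure.ext _ m _ _ fun s hs => ?_
  rw [trim_measurableSet_eq hm hs, trim_measurableSet_eq hm hs, withDensity_apply _ (hm s hs),
    withDensity_apply _ (hm s hs), setLIntegral_condLExp hm _ _ hs]

theorem lintegral_condLExp_mul (hm : m ≤ m0) [SigmaFinite (μ.trim hm)] {f g : Ω → ℝ≥0∞}
    (hf : AEMeasurable f μ) (hg : Measurable[m] g) :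
    ∫⁻ ω, μ⁻[f | m] ω * g ω ∂μ = ∫⁻ ω, f ω * g ω ∂μ := by
  have hg₀ : AEMeasurable g μ := (hg.mono hm le_rfl).aemeasurable
  calc ∫⁻ ω, μ⁻[f | m] ω * g ω ∂μ
      = ∫⁻ ω, g ω ∂μ.withDensity μ⁻[f | m] :=
        (lintegral_withDensity_eq_lintegral_mul₀ (by fun_prop) hg₀).symm
    _ = ∫⁻ ω, g ω ∂(μ.withDensity μ⁻[f | m]).trim hm := (lintegral_trim hm hg).symm
    _ = ∫⁻ ω, g ω ∂(μ.withDensity f).trim hm := by rw [trim_withDensity_condLExp]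
    _ = ∫⁻ ω, g ω ∂μ.withDensity f := lintegral_trim hm hg
    _ = ∫⁻ ω, f ω * g ω ∂μ := lintegral_withDensity_eq_lintegral_mul₀ hf hg₀

theorem stronglyMeasurable_comap_self [TopologicalSpace E]
    [TopologicalSpace.PseudoMetrizableSpace E] [MeasurableSpace E] [BorelSpace E] {f : Ω → E}
    (hf : StronglyMeasurable f) :
    StronglyMeasurable[MeasurableSpace.comap f inferInstance] f :=
  (stronglyMeasurable_iff_measurable_separable (m := .comap f inferInstance)).2
    ⟨comap_measurable f, hf.isSeparable_range⟩

variable [NormedAddCommGroup E] [NormedSpace ℝ E]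

theorem lintegral_enorm_condExp_smul (hm : m ≤ m0) [SigmaFinite (μ.trim hm)] {f : Ω → ℝ}
    {g : Ω → E} (hf : Integrable f μ) (hf₀ : 0 ≤ᵐ[μ] f) (hg : StronglyMeasurable[m] g) :
    ∫⁻ ω, ‖(μ[f | m] • g) ω‖ₑ ∂μ = ∫⁻ ω, ‖(f • g) ω‖ₑ ∂μ :=
  calc ∫⁻ ω, ‖(μ[f | m] • g) ω‖ₑ ∂μ
      = ∫⁻ ω, μ⁻[fun ω => ENNReal.ofReal (f ω) | m] ω * ‖g ω‖ₑ ∂μ := by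
        refine lintegral_congr_ae ?_
        filter_upwards [condLExp_ofReal m hf hf₀, condExp_nonneg (m := m) hf₀] with ω hω hω₀
        rw [hω, Pi.smul_apply', enorm_smul, Real.enorm_of_nonneg hω₀]
    _ = ∫⁻ ω, ENNReal.ofReal (f ω) * ‖g ω‖ₑ ∂μ :=
        lintegral_condLExp_mul hm hf.1.aemeasurable.ennreal_ofReal hg.enorm
    _ = ∫⁻ ω, ‖(f • g) ω‖ₑ ∂μ := by
        refine lintegral_congr_ae ?_
        filter_upwards [hf₀] with ω hω₀
        rw [Pi.smul_apply', enorm_smul, Real.enorm_of_nonneg hω₀]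

theorem integrable_condExp_smul_iff (hm : m ≤ m0) [SigmaFinite (μ.trim hm)] {f : Ω → ℝ}
    {g : Ω → E} (hf : Integrable f μ) (hf₀ : 0 ≤ᵐ[μ] f) (hg : StronglyMeasurable[m] g) :
    Integrable (μ[f | m] • g) μ ↔ Integrable (f • g) μ := by
  have hg₀ : AEStronglyMeasurable g μ := (hg.mono hm).aestronglyMeasurable
  simp only [Integrable, integrable_condExp.1.smul hg₀, hf.1.smul hg₀, HasFiniteIntegral,
    lintegral_enorm_condExp_smul hm hf hf₀ hg]

variable [CompleteSpace E]

theorem condExp_div_condExp_smul (hm : m ≤ m0) [SigmaFinite (μ.trim hm)] {f : Ω → ℝ}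
    {g : Ω → E} (hf : Integrable f μ) (hf₀ : 0 ≤ᵐ[μ] f) (hfm : ∀ᵐ ω ∂μ, μ[f | m] ω ≠ 0)
    (hg : StronglyMeasurable[m] g) (hgi : Integrable g μ) :
    μ[(f / μ[f | m]) • g | m] =ᵐ[μ] g := by
  have hw : StronglyMeasurable[m] ((μ[f | m])⁻¹ • g) :=
    stronglyMeasurable_condExp.inv₀.smul hg
  have hcancel : μ[f | m] • (μ[f | m])⁻¹ • g =ᵐ[μ] g := by
    filter_upwards [hfm] with ω hω using smul_inv_smul₀ hω (g ω)
  have hint : Integrable (f • (μ[f | m])⁻¹ • g) μ :=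
    (integrable_condExp_smul_iff hm hf hf₀ hw).1 (hgi.congr hcancel.symm)
  rw [div_eq_mul_inv, mul_smul]
  exact (condExp_smul_of_aestronglyMeasurable_right hf hint hw.aestronglyMeasurable).trans hcancel

theorem condExp_eq_integral_of_indep_comap [MeasurableSpace E] [BorelSpace E] (hm : m ≤ m0)
    [SigmaFinite (μ.trim hm)] {f : Ω → E} (hf : StronglyMeasurable f)
    (hfm : Indep (MeasurableSpace.comap f inferInstance) m μ) :
    μ[f | m] =ᵐ[μ] fun _ => ∫ ω, f ω ∂μ :=
  condExp_indep_eq hf.measurable.comap_le hm (stronglyMeasurable_comap_self hf) hfm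

theorem importance_weighted_condexp_eq_integral_general [MeasurableSpace E] [BorelSpace E]
    {m₁ m₂ : MeasurableSpace Ω} (h12 : m₁ ≤ m₂) (h2 : m₂ ≤ m0)
    [SigmaFinite (μ.trim (h12.trans h2))] {Z : Ω → E} (hZmeas : StronglyMeasurable[m₂] Z)
    (hZint : Integrable Z μ) (hZindep : Indep (MeasurableSpace.comap Z inferInstance) m₁ μ)
    {p Q : Ω → ℝ} (hp : ∀ᵐ ω ∂μ, p ω ≠ 0) (hQint : Integrable Q μ) (hQ₀ : 0 ≤ᵐ[μ] Q)
    (hQcond : μ[Q | m₂] =ᵐ[μ] p) :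
    μ[fun ω => (Q ω / p ω) • Z ω | m₁] =ᵐ[μ] fun _ => ∫ ω, Z ω ∂μ := by
  have : SigmaFinite (μ.trim h2) := sigmaFiniteTrim_mono h2 h12
  have hQne : ∀ᵐ ω ∂μ, μ[Q | m₂] ω ≠ 0 := by
    filter_upwards [hQcond, hp] with ω hω hpω using hω ▸ hpω
  have hweight : (fun ω => (Q ω / p ω) • Z ω) =ᵐ[μ] (Q / μ[Q | m₂]) • Z := by
    filter_upwards [hQcond] with ω hω
    rw [Pi.smul_apply', Pi.div_apply, hω]
  calc μ[fun ω => (Q ω / p ω) • Z ω | m₁]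
      =ᵐ[μ] μ[(Q / μ[Q | m₂]) • Z | m₁] := condExp_congr_ae hweight
    _ =ᵐ[μ] μ[μ[(Q / μ[Q | m₂]) • Z | m₂] | m₁] := (condExp_condExp_of_le h12 h2).symm
    _ =ᵐ[μ] μ[Z | m₁] :=
        condExp_congr_ae (condExp_div_condExp_smul h2 hQint hQ₀ hQne hZmeas hZint)
    _ =ᵐ[μ] fun _ => ∫ ω, Z ω ∂μ :=
        condExp_eq_integral_of_indep_comap (h12.trans h2) (hZmeas.mono h2) hZindep

end

/-- martingale-difference computation in the proof of Lemma 4.1: With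
sub-σ-algebras `m₁ ≤ m₂`, a bounded `m₂`-measurable `Z` whose generated σ-algebra is
independent of `m₁`, an `m₂`-measurable query probability `p` with `0 < p ≤ 1` a.e., and a
`{0,1}`-valued integrable `Q` with `E[Q ∣ m₂] = p` a.e., one has
`E[(Q / p) · Z ∣ m₁] = E[Z]` almost everywhere. -/
theorem importance_weighted_condexp_eq_integral
    {Ω : Type*} [m0 : MeasurableSpace Ω] (μ : Measure Ω) [IsProbabilityMeasure μ]
    (m₁ m₂ : MeasurableSpace Ω) (h12 : m₁ ≤ m₂) (h2 : m₂ ≤ m0)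
    (Z : Ω → ℝ) (hZmeas : Measurable[m₂] Z) (hZbdd : ∃ C : ℝ, ∀ ω, |Z ω| ≤ C)
    (hZindep : Indep (MeasurableSpace.comap Z inferInstance) m₁ μ)
    (p : Ω → ℝ) (hpmeas : Measurable[m₂] p)
    (hp : ∀ᵐ ω ∂μ, 0 < p ω ∧ p ω ≤ 1)
    (Q : Ω → ℝ) (hQint : Integrable Q μ) (hQval : ∀ ω, Q ω = 0 ∨ Q ω = 1)
    (hQcond : μ[Q|m₂] =ᵐ[μ] p) :
    μ[fun ω => Q ω / p ω * Z ω|m₁] =ᵐ[μ] fun _ => ∫ ω, Z ω ∂μ := by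
  obtain ⟨C, hC⟩ := hZbdd
  have hZint : Integrable Z μ :=
    .of_bound (hZmeas.mono h2 le_rfl).aestronglyMeasurable C (.of_forall hC)
  have hQ₀ : 0 ≤ Q := fun ω => (hQval ω).elim ge_of_eq fun h => h ▸ zero_le_one
  exact importance_weighted_condexp_eq_integral_general h12 h2 hZmeas.stronglyMeasurable hZint
    hZindep (hp.mono fun _ h => h.1.ne') hQint (.of_forall hQ₀) hQcond
end

section
/- Let φ : ℝ → ℝ be convex and non-increasing (antitone), and let H and H' be finite nonempty sets of functions from a set X to ℝ such that the convex hull of H' is contained in the convex hull of H. Then for every x ∈ X, every pair h, h' in the convex hull of H', and every y ∈ {−1, +1}, |φ(y·h(x)) − φ(y·h'(x))| ≤ max_{h₁, h₂ ∈ H} max_{y ∈ {−1,+1}} |φ(y·h₁(x)) − φ(y·h₂(x))|. -/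
/-!
Evaluating a hypothesis `h` at `x` and scaling by a label `y` is linear in `h`, so its composition
with an antitone `φ` is quasilinear. Each value of a quasilinear function on a convex hull lies
between two of its values on the generating set, so every difference of values on the hull is
dominated by a difference of values on the generating set.
-/

section MaximumPrinciple

variable {𝕜 E β : Type*} [Semiring 𝕜] [PartialOrder 𝕜] [AddCommMonoid E] [Module 𝕜 E]
  {s t : Set E} {f : E → β} {x x' : E}

theorem exists_ge_of_quasiconvexOn_of_mem_convexHull [LinearOrder β] (hf : QuasiconvexOn 𝕜 s f)
    (hts : t ⊆ s) (hx : x ∈ convexHull 𝕜 t) : ∃ z ∈ t, f x ≤ f z := by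
  by_contra! hlt
  have hsublevel : convexHull 𝕜 t ⊆ {z ∈ s | f z < f x} :=
    convexHull_min (fun z hz => ⟨hts hz, hlt z hz⟩) (hf.convex_lt (f x))
  exact lt_irrefl _ (hsublevel hx).2

theorem exists_le_of_quasiconcaveOn_of_mem_convexHull [LinearOrder β] (hf : QuasiconcaveOn 𝕜 s f)
    (hts : t ⊆ s) (hx : x ∈ convexHull 𝕜 t) : ∃ z ∈ t, f z ≤ f x :=
  exists_ge_of_quasiconvexOn_of_mem_convexHull hf.dual hts hx

theorem exists_abs_sub_le_of_quasilinearOn_of_mem_convexHull [AddCommGroup β] [LinearOrder β]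
    [IsOrderedAddMonoid β] (hf : QuasilinearOn 𝕜 s f) (hts : t ⊆ s) (hx : x ∈ convexHull 𝕜 t)
    (hx' : x' ∈ convexHull 𝕜 t) : ∃ z ∈ t, ∃ z' ∈ t, |f x - f x'| ≤ |f z - f z'| := by
  wlog hle : f x' ≤ f x generalizing x x'
  · simpa only [abs_sub_comm (f x)] using this hx' hx (le_of_not_ge hle)
  obtain ⟨z, hz, hxz⟩ := exists_ge_of_quasiconvexOn_of_mem_convexHull hf.1 hts hx
  obtain ⟨z', hz', hzx'⟩ := exists_le_of_quasiconcaveOn_of_mem_convexHull hf.2 hts hx'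
  refine ⟨z, hz, z', hz', ?_⟩
  calc |f x - f x'| = f x - f x' := abs_of_nonneg (sub_nonneg.2 hle)
    _ ≤ f z - f z' := sub_le_sub hxz hzx'
    _ ≤ |f z - f z'| := le_abs_self _

end MaximumPrinciple

theorem quasilinearOn_univ_of_isLinearMap {𝕜 E β : Type*} [Semiring 𝕜] [PartialOrder 𝕜]
    [AddCommMonoid E] [Module 𝕜 E] [AddCommMonoid β] [PartialOrder β] [IsOrderedAddMonoid β]
    [Module 𝕜 β] [PosSMulMono 𝕜 β] {f : E → β} (hf : IsLinearMap 𝕜 f) :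
    QuasilinearOn 𝕜 Set.univ f :=
  ⟨convex_univ.quasiconvexOn_of_convex_le (convex_halfSpace_le hf),
    convex_univ.quasiconcaveOn_of_convex_ge (convex_halfSpace_ge hf)⟩

section MarginLoss

variable {X 𝕜 β : Type*} [CommSemiring 𝕜] [LinearOrder 𝕜] [IsOrderedRing 𝕜] {φ : 𝕜 → β}

theorem quasilinearOn_marginLoss [Preorder β] (hφ : Antitone φ) (x : X) (y : 𝕜) :
    QuasilinearOn 𝕜 Set.univ fun h : X → 𝕜 => φ (y * h x) :=
  have hmargin : IsLinearMap 𝕜 fun h : X → 𝕜 => y * h x :=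
    (y • (LinearMap.proj x : (X → 𝕜) →ₗ[𝕜] 𝕜)).isLinear
  (quasilinearOn_univ_of_isLinearMap hmargin).antitone_comp hφ

theorem convexHull_pairwise_disagreement_le_max_general [AddCommGroup β] [LinearOrder β]
    [IsOrderedAddMonoid β] (hφ : Antitone φ) {H : Finset (X → 𝕜)} (hne : H.Nonempty) (x : X)
    {h h' : X → 𝕜} (hh : h ∈ convexHull 𝕜 (H : Set (X → 𝕜)))
    (hh' : h' ∈ convexHull 𝕜 (H : Set (X → 𝕜))) {Y : Finset 𝕜} {y : 𝕜} (hy : y ∈ Y) :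
    |φ (y * h x) - φ (y * h' x)| ≤
      (H ×ˢ H).sup' (hne.product hne) fun gg =>
        Y.sup' ⟨y, hy⟩ fun y' => |φ (y' * gg.1 x) - φ (y' * gg.2 x)| := by
  obtain ⟨g, hg, g', hg', hle⟩ := exists_abs_sub_le_of_quasilinearOn_of_mem_convexHull
    (quasilinearOn_marginLoss hφ x y) (Set.subset_univ _) hh hh'
  calc |φ (y * h x) - φ (y * h' x)| ≤ |φ (y * g x) - φ (y * g' x)| := hle
    _ ≤ Y.sup' ⟨y, hy⟩ fun y' => |φ (y' * g x) - φ (y' * g' x)| :=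
      Finset.le_sup' (fun y' => |φ (y' * g x) - φ (y' * g' x)|) hy
    _ ≤ _ := Finset.le_sup' (fun gg : (X → 𝕜) × (X → 𝕜) =>
      Y.sup' ⟨y, hy⟩ fun y' => |φ (y' * gg.1 x) - φ (y' * gg.2 x)|) (Finset.mk_mem_product hg hg')

end MarginLoss

/-- key step of Lemma A.5 via Lemma 5.1: for a convex, non-increasing `φ`,
and finite nonempty sets `H`, `H'` of hypotheses with `convexHull H' ⊆ convexHull H`, every
pointwise margin-loss disagreement between hypotheses in the convex hull of `H'` (over labels
`y ∈ {-1, 1}`) is bounded by the maximum pairwise disagreement over `H`. -/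
theorem convexHull_pairwise_disagreement_le_max
    {X : Type*} (φ : ℝ → ℝ) (hconv : ConvexOn ℝ Set.univ φ) (hanti : Antitone φ)
    (H H' : Finset (X → ℝ)) (hne : H.Nonempty) (hne' : H'.Nonempty)
    (hsub : convexHull ℝ (↑H' : Set (X → ℝ)) ⊆ convexHull ℝ (↑H : Set (X → ℝ))) :
    ∀ x : X, ∀ h ∈ convexHull ℝ (↑H' : Set (X → ℝ)), ∀ h' ∈ convexHull ℝ (↑H' : Set (X → ℝ)),
      ∀ y ∈ ({-1, 1} : Set ℝ),
        |φ (y * h x) - φ (y * h' x)| ≤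
          (H ×ˢ H).sup' (hne.product hne) fun hh =>
            ({-1, 1} : Finset ℝ).sup' ⟨-1, by simp⟩ fun y' =>
              |φ (y' * hh.1 x) - φ (y' * hh.2 x)| := by
  intro x h hh h' hh' y hy
  exact convexHull_pairwise_disagreement_le_max_general hanti hne x (hsub hh) (hsub hh')
    (by simpa using hy)
end

section
/- Let V be a set of hypotheses, R : V → ℝ, 𝓛 : V → V → ℝ, and T ≥ 1. For each t ∈ {1, …, T} let H_t ⊆ V, L_t : V → ℝ, Δ_t ≥ 0, h^𝒯_t ∈ V, and let ĥ_t ∈ H_t satisfy L_t(ĥ_t) ≤ L_t(h) for all h ∈ H_t. Define H'_t = {h ∈ H_t : L_t(h) ≤ L_t(ĥ_t) + (1 + 𝓛(h^𝒯_t, ĥ_t))·Δ_t}. Assume: (i) h^𝒯_1 ∈ H_1; (ii) for each t < T, H_{t+1} = H'_t ∪ H̃_t for some set H̃_t ⊆ V, and h^𝒯_{t+1} ∈ {h^𝒯_t} ∪ H̃_t; (iii) for each t, the concentration event: for all h, h' ∈ H_t, |(L_t(h) − L_t(h')) − (R(h) − R(h'))| ≤ (1 + 𝓛(h, h'))·Δ_t;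 and (iv) for each t, R(h^𝒯_t) ≤ R(h) for every h ∈ H_t. Then h^𝒯_t ∈ H_t for every t ∈ {1, …, T}. -/
/-!
An optimal hypothesis has nonpositive risk gap to any reference, so a deviation bound between the
empirical and the true gap bounds its empirical gap by the same slack. The pruning threshold is
exactly this slack, hence an optimal teacher survives pruning; a replacement teacher is one of
the newly generated hypotheses, which enter the next candidate set unpruned.
-/

section Pruning

variable {V α : Type*}

lemma mem_of_forall_retained_or_new {H P N : ℕ → Set V} {x : ℕ → V} {t₀ T : ℕ}
    (hinit : x t₀ ∈ H t₀)
    (hH : ∀ t, t₀ ≤ t → t < T → P t ∪ N t ⊆ H (t + 1))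
    (hx : ∀ t, t₀ ≤ t → t < T → x (t + 1) ∈ insert (x t) (N t))
    (hkeep : ∀ t, t₀ ≤ t → t < T → x t ∈ H t → x t ∈ P t) :
    ∀ t, t₀ ≤ t → t ≤ T → x t ∈ H t := by
  intro t ht
  induction t, ht using Nat.le_induction with
  | base => exact fun _ => hinit
  | succ t ht ih =>
    intro (htT : t < T)
    apply hH t ht htT
    rcases hx t ht htT with hretained | hnew
    · rw [hretained]
      exact Or.inl (hkeep t ht htT (ih htT.le))
    · exact Or.inr hnew

/-- The hypotheses of `S` whose loss `ℓ` exceeds that of the reference hypothesis `ref` by at most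
the slack `ε`: the result of one pruning step. The slack is left as a free value, so that a single
notion covers thresholds such as `(1 + 𝓛 h^𝒯_t ĥ_t) * Δ_t`. -/
def prunedSet [Add α] [LE α] (S : Set V) (ℓ : V → α) (ref : V) (ε : α) : Set V :=
  {h ∈ S | ℓ h ≤ ℓ ref + ε}

variable [AddCommGroup α] [PartialOrder α] [IsOrderedAddMonoid α]

lemma mem_prunedSet_of_deviation_le {S : Set V} {ℓ R : V → α} {h ref : V} {ε : α} (hS : h ∈ S)
    (hdev : (ℓ h - ℓ ref) - (R h - R ref) ≤ ε) (hR : R h ≤ R ref) :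
    h ∈ prunedSet S ℓ ref ε := by
  have hgap : ℓ h - ℓ ref ≤ ε :=
    calc ℓ h - ℓ ref ≤ ε + (R h - R ref) := sub_le_iff_le_add.mp hdev
      _ ≤ ε := add_le_of_nonpos_right (sub_nonpos.mpr hR)
  exact ⟨hS, sub_le_iff_le_add'.mp hgap⟩

theorem self_improving_teacher_maintained_general {R : V → α} {H Htil : ℕ → Set V}
    {L : ℕ → V → α} {ε : ℕ → V → V → α} {hTeach ref : ℕ → V} {t₀ T : ℕ}
    (hinit : hTeach t₀ ∈ H t₀)
    (href : ∀ t, t₀ ≤ t → t < T → ref t ∈ H t)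
    (hstep : ∀ t, t₀ ≤ t → t < T →
      prunedSet (H t) (L t) (ref t) (ε t (hTeach t) (ref t)) ∪ Htil t ⊆ H (t + 1))
    (hTstep : ∀ t, t₀ ≤ t → t < T → hTeach (t + 1) ∈ insert (hTeach t) (Htil t))
    (hconc : ∀ t, t₀ ≤ t → t < T → ∀ h ∈ H t, ∀ h' ∈ H t,
      (L t h - L t h') - (R h - R h') ≤ ε t h h')
    (hopt : ∀ t, t₀ ≤ t → t < T → ∀ h ∈ H t, R (hTeach t) ≤ R h) :
    ∀ t, t₀ ≤ t → t ≤ T → hTeach t ∈ H t := by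
  refine mem_of_forall_retained_or_new hinit hstep hTstep fun t ht htT hmem => ?_
  exact mem_prunedSet_of_deviation_le hmem
    (hconc t ht htT _ hmem _ (href t ht htT)) (hopt t ht htT _ (href t ht htT))

end Pruning

/-- Theorem 5.4, part 1: in teaching-based hypothesis pruning with
self-improvement, on the concentration events, the (possibly updated) teaching hypothesis
`hTeach t` is maintained in the candidate hypothesis set `H t` at every round `t ∈ {1, …, T}`.
Here `H' t` is the pruned set, `H (t+1) = H' t ∪ Htil t` with `Htil t` the newly generated
hypotheses, `hTeach (t+1) ∈ {hTeach t} ∪ Htil t`, and `hTeach t` minimizes `R` over `H t`. -/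
theorem self_improving_teacher_maintained
    {V : Type*} (R : V → ℝ) (𝓛 : V → V → ℝ) (T : ℕ) (hT : 1 ≤ T)
    (H : ℕ → Set V) (L : ℕ → V → ℝ) (Δ : ℕ → ℝ) (hΔ : ∀ t, 0 ≤ Δ t)
    (hTeach : ℕ → V) (hhat : ℕ → V)
    (hhatmem : ∀ t, 1 ≤ t → t ≤ T → hhat t ∈ H t)
    (hhatmin : ∀ t, 1 ≤ t → t ≤ T → ∀ h ∈ H t, L t (hhat t) ≤ L t h)
    (H' : ℕ → Set V)
    (hH' : ∀ t, 1 ≤ t → t ≤ T →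
      H' t = {h ∈ H t | L t h ≤ L t (hhat t) + (1 + 𝓛 (hTeach t) (hhat t)) * Δ t})
    (hinit : hTeach 1 ∈ H 1)
    (Htil : ℕ → Set V)
    (hstep : ∀ t, 1 ≤ t → t < T → H (t + 1) = H' t ∪ Htil t)
    (hTstep : ∀ t, 1 ≤ t → t < T → hTeach (t + 1) ∈ insert (hTeach t) (Htil t))
    (hconc : ∀ t, 1 ≤ t → t ≤ T → ∀ h ∈ H t, ∀ h' ∈ H t,
      |(L t h - L t h') - (R h - R h')| ≤ (1 + 𝓛 h h') * Δ t)
    (hopt : ∀ t, 1 ≤ t → t ≤ T → ∀ h ∈ H t, R (hTeach t) ≤ R h) :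
    ∀ t, 1 ≤ t → t ≤ T → hTeach t ∈ H t := by
  exact self_improving_teacher_maintained_general hinit (fun t h₁ hlt => hhatmem t h₁ hlt.le)
    (fun t h₁ hlt => (hH' t h₁ hlt.le ▸ hstep t h₁ hlt).ge) hTstep
    (fun t h₁ hlt h hh h' hh' => (le_abs_self _).trans (hconc t h₁ hlt.le h hh h' hh'))
    (fun t h₁ hlt => hopt t h₁ hlt.le)
end

section
/- Let Y be a finite nonempty type, μ a probability measure on X × Y for a measurable space X, and ℓ : ℝ × Y → ℝ a loss with values in [0,1]. Let 𝓗 be a finite set of measurable hypotheses h : X → ℝ, define ρ(h, h') = ∫ |ℓ(h(x), y) − ℓ(h'(x), y)| dμ(x, y), fix h^𝒯 ∈ 𝓗 and r > 0, and let B(h^𝒯, r) = {h ∈ 𝓗 : ρ(h, h^𝒯) ≤ r}. Suppose θ ∈ ℝ satisfies θ ≥ (1/r) ∫ max_{h ∈ B(h^𝒯, r)} max_{y' ∈ Y} |ℓ(h(x), y') − ℓ(h^𝒯(x), y')| dμ(x, y). Then for any nonempty H ⊆ B(h^𝒯, r), the expected query probability satisfies ∫ max_{h, h' ∈ H} max_{y'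 ∈ Y} |ℓ(h(x), y') − ℓ(h'(x), y')| dμ(x, y) ≤ 2·θ·r. -/
open MeasureTheory

/-- The disagreement `ρ(h, h') = ∫ |ℓ(h(x), y) − ℓ(h'(x), y)| dμ(x, y)`. -/
noncomputable def rho {X Y : Type*} [MeasurableSpace X] [MeasurableSpace Y]
    (μ : Measure (X × Y)) (ℓ : ℝ → Y → ℝ) (h h' : X → ℝ) : ℝ :=
  ∫ p, |ℓ (h p.1) p.2 - ℓ (h' p.1) p.2| ∂μ

/-!
For each `x`, the maximum over `y` of `|ℓ(h(x), y) − ℓ(h'(x), y)|` is the sup distance between the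
loss vectors `ℓ(h(x), ·)` and `ℓ(h'(x), ·)` in `Y → ℝ`. The triangle inequality through the loss
vector of the center `hT` bounds every pairwise distance in `H` by twice the largest distance to
the center; integrate and apply the defining inequality of `θ`.
-/

section PairwiseDistance

variable {ι M : Type*} [PseudoMetricSpace M]

theorem sup'_dist_pair_le_two_mul_sup'_dist {S T : Finset ι} (hS : S.Nonempty) (hST : S ⊆ T)
    (f : ι → M) (c : M) :
    (S ×ˢ S).sup' (hS.product hS) (fun ij => dist (f ij.1) (f ij.2)) ≤
      2 * T.sup' (hS.mono hST) fun i => dist (f i) c := by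
  have dist_le_sup' {i : ι} (hi : i ∈ S) :
      dist (f i) c ≤ T.sup' (hS.mono hST) fun i => dist (f i) c :=
    Finset.le_sup' (fun i => dist (f i) c) (hST hi)
  refine Finset.sup'_le _ _ fun ⟨i, j⟩ hij => ?_
  obtain ⟨hi, hj⟩ := Finset.mem_product.mp hij
  calc dist (f i) (f j) ≤ dist (f i) c + dist (f j) c := dist_triangle_right _ _ _
    _ ≤ _ := add_le_add (dist_le_sup' hi) (dist_le_sup' hj)
    _ = _ := (two_mul _).symm

theorem integral_sup'_dist_pair_le_two_mul_integral_sup'_dist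
    {Ω : Type*} [MeasurableSpace Ω] {μ : Measure Ω}
    {S T : Finset ι} (hS : S.Nonempty) (hST : S ⊆ T) {f : ι → Ω → M} {c : Ω → M}
    (hpair : Integrable (fun ω => (S ×ˢ S).sup' (hS.product hS)
      fun ij => dist (f ij.1 ω) (f ij.2 ω)) μ)
    (hcenter : Integrable (fun ω => T.sup' (hS.mono hST) fun i => dist (f i ω) (c ω)) μ) :
    ∫ ω, (S ×ˢ S).sup' (hS.product hS) (fun ij => dist (f ij.1 ω) (f ij.2 ω)) ∂μ ≤
      2 * ∫ ω, T.sup' (hS.mono hST) (fun i => dist (f i ω) (c ω)) ∂μ := by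
  rw [← integral_const_mul]
  exact integral_mono hpair (hcenter.const_mul 2) fun ω =>
    sup'_dist_pair_le_two_mul_sup'_dist hS hST (fun i => f i ω) (c ω)

end PairwiseDistance

theorem sup'_abs_sub_eq_dist {Y : Type*} [Fintype Y] [Nonempty Y] (u v : Y → ℝ) :
    (Finset.univ.sup' Finset.univ_nonempty fun y => |u y - v y|) = dist u v := by
  refine le_antisymm (Finset.sup'_le _ _ fun y _ => dist_le_pi_dist u v y) ?_
  exact (dist_pi_le_iff').mpr fun y =>
    Finset.le_sup' (fun y => |u y - v y|) (Finset.mem_univ y)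

theorem expected_query_probability_le_two_theta_r_general
    {X Y Z : Type*} [MeasurableSpace X] [MeasurableSpace Y] [Fintype Y] [Nonempty Y]
    {μ : Measure (X × Y)} {ℓ : Z → Y → ℝ} {hT : X → Z} {r θ : ℝ} (hr : 0 < r)
    {H B : Finset (X → Z)} (hH : H.Nonempty) (hHB : H ⊆ B)
    (hθint : Integrable
      (fun p : X × Y => B.sup' (hH.mono hHB) fun h =>
        Finset.univ.sup' Finset.univ_nonempty fun y' : Y =>
          |ℓ (h p.1) y' - ℓ (hT p.1) y'|) μ)
    (hθ : θ ≥ (1 / r) *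
      ∫ p, B.sup' (hH.mono hHB)
        (fun h => Finset.univ.sup' Finset.univ_nonempty fun y' : Y =>
          |ℓ (h p.1) y' - ℓ (hT p.1) y'|) ∂μ)
    (hint : Integrable
      (fun p : X × Y => (H ×ˢ H).sup' (hH.product hH) fun hh =>
        Finset.univ.sup' Finset.univ_nonempty fun y' : Y =>
          |ℓ (hh.1 p.1) y' - ℓ (hh.2 p.1) y'|) μ) :
    (∫ p, (H ×ˢ H).sup' (hH.product hH)
        (fun hh => Finset.univ.sup' Finset.univ_nonempty fun y' : Y =>
          |ℓ (hh.1 p.1) y' - ℓ (hh.2 p.1) y'|) ∂μ) ≤ 2 * θ * r := by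
  simp only [sup'_abs_sub_eq_dist] at hθint hθ hint ⊢
  rw [ge_iff_le, one_div_mul_eq_div, div_le_iff₀ hr] at hθ
  calc _ ≤ 2 * ∫ p, B.sup' (hH.mono hHB) (fun h => dist (ℓ (h p.1)) (ℓ (hT p.1))) ∂μ :=
        integral_sup'_dist_pair_le_two_mul_integral_sup'_dist hH hHB hint hθint
    _ ≤ 2 * (θ * r) := by gcongr
    _ = 2 * θ * r := (mul_assoc _ _ _).symm

/-- central step of the label-complexity proof of Theorem 4.3: if the error
disagreement coefficient `θ` satisfies its defining inequality at radius `r` around the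
teaching hypothesis `hT`, then for any nonempty candidate set `H` contained in the ρ-ball
`B(hT, r)` (taken inside the finite class `𝓗`), the expected query probability — the expected
maximum pairwise error disagreement over `H` — is at most `2 · θ · r`. (The nonemptiness of
the ball `hBne` is automatic since `hT` itself belongs to it.) -/
theorem expected_query_probability_le_two_theta_r
    {X Y : Type*} [MeasurableSpace X] [MeasurableSpace Y] [Fintype Y] [Nonempty Y]
    (μ : Measure (X × Y)) [IsProbabilityMeasure μ]
    (ℓ : ℝ → Y → ℝ) (hℓ : ∀ z y, ℓ z y ∈ Set.Icc (0 : ℝ) 1)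
    (𝓗 : Finset (X → ℝ)) (hmeas : ∀ h ∈ 𝓗, Measurable h)
    (hT : X → ℝ) (hT𝓗 : hT ∈ 𝓗) (r : ℝ) (hr : 0 < r)
    (hBne : (𝓗.filter fun h => rho μ ℓ h hT ≤ r).Nonempty)
    (θ : ℝ)
    (hθint : Integrable
      (fun p : X × Y => (𝓗.filter fun h => rho μ ℓ h hT ≤ r).sup' hBne fun h =>
        Finset.univ.sup' Finset.univ_nonempty fun y' : Y =>
          |ℓ (h p.1) y' - ℓ (hT p.1) y'|) μ)
    (hθ : θ ≥ (1 / r) *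
      ∫ p, (𝓗.filter fun h => rho μ ℓ h hT ≤ r).sup' hBne
        (fun h => Finset.univ.sup' Finset.univ_nonempty fun y' : Y =>
          |ℓ (h p.1) y' - ℓ (hT p.1) y'|) ∂μ)
    (H : Finset (X → ℝ)) (hHne : H.Nonempty)
    (hHsub : H ⊆ 𝓗.filter fun h => rho μ ℓ h hT ≤ r)
    (hint : Integrable
      (fun p : X × Y => (H ×ˢ H).sup' (hHne.product hHne) fun hh =>
        Finset.univ.sup' Finset.univ_nonempty fun y' : Y =>
          |ℓ (hh.1 p.1) y' - ℓ (hh.2 p.1) y'|) μ) :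
    (∫ p, (H ×ˢ H).sup' (hHne.product hHne)
        (fun hh => Finset.univ.sup' Finset.univ_nonempty fun y' : Y =>
          |ℓ (hh.1 p.1) y' - ℓ (hh.2 p.1) y'|) ∂μ) ≤ 2 * θ * r :=
  expected_query_probability_le_two_theta_r_general hr hHne hHsub hθint hθ hint
end
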